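/- Let a > 0 with a ≠ 1 and let s > a/4. Let ψ = 1 - χ, where χ ∈ C_c^∞(ℝ) is even with χ = 0 outside (-2,2), χ = 1 on [-1,1], and 0 ≤ χ ≤ 1. Then there exists a constant C > 0 such that for every measurable function t : (0,∞) → (-1,1), every sign ε ∈ {+1,-1}, and every f ∈ C_c^∞((0,∞)): ∫_0^∞ |ψ(r) ∫_0^∞ e^{i(ε rρ + t(r) ρ^a)} ρ^{-s} ψ(ρ) f(ρ) dρ|² dr ≤ C² ∫_0^∞ |f(ρ)|² dρ, where C is independent of t, ε, and f. -/

import Mathlib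

open MeasureTheory Real

noncomputable section

lemma integral_exp_mul_deriv {p q : ℝ} {φ φ' u u' : ℝ → ℝ}
    (hφ : ∀ x ∈ Set.uIcc p q, HasDerivAt φ (φ' x) x)
    (hu : ∀ x ∈ Set.uIcc p q, HasDerivAt u (u' x) x)
    (hφ' : ContinuousOn φ' (Set.uIcc p q)) (hu' : ContinuousOn u' (Set.uIcc p q))
    (hp : u p = 0) (hq : u q = 0) :
    ∫ x in p..q, Complex.exp (Complex.I * (φ x : ℂ)) * ((φ' x * u x : ℝ) : ℂ) =
      Complex.I * ∫ x in p..q, Complex.exp (Complex.I * (φ x : ℂ)) * (u' x : ℂ) := by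
  have he : ∀ x ∈ Set.uIcc p q, HasDerivAt (fun x => Complex.exp (Complex.I * (φ x : ℂ)))
      (Complex.exp (Complex.I * (φ x : ℂ)) * (Complex.I * (φ' x : ℂ))) x := fun x hx =>
    ((hφ x hx).ofReal_comp.const_mul Complex.I).cexp
  have hec : ContinuousOn (fun x => Complex.exp (Complex.I * (φ x : ℂ))) (Set.uIcc p q) :=
    fun x hx => (he x hx).continuousAt.continuousWithinAt
  have h := intervalIntegral.integral_mul_deriv_eq_deriv_mul
    (fun x hx => he x hx) (fun x hx => (hu x hx).ofReal_comp)
    (ContinuousOn.intervalIntegrable (hec.mul (continuousOn_const.mul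
      (Complex.continuous_ofReal.comp_continuousOn hφ'))))
    (ContinuousOn.intervalIntegrable (Complex.continuous_ofReal.comp_continuousOn hu'))
  rw [h, hp, hq]
  simp only [Complex.ofReal_zero, mul_zero, sub_zero, zero_sub, mul_neg]
  rw [← intervalIntegral.integral_const_mul, ← intervalIntegral.integral_neg]
  congr 1
  ext x
  push_cast
  linear_combination (Complex.exp (Complex.I * (φ x : ℂ)) * φ' x * u x) * Complex.I_sq

lemma norm_cexp_I_mul_ofReal (x : ℝ) : ‖Complex.exp (Complex.I * (x : ℂ))‖ = 1 := by
  rw [mul_comm, Complex.norm_exp_ofReal_mul_I]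

lemma norm_oscillatory_integral_le_of_deriv2 {p q : ℝ} (hpq : p ≤ q)
    {φ φ₁ φ₂ g g₁ : ℝ → ℝ} {m G σ : ℝ} (hm : 0 < m) (hσ : |σ| = 1)
    (hφ : ∀ x ∈ Set.Icc p q, HasDerivAt φ (φ₁ x) x)
    (hφ₁ : ∀ x ∈ Set.Icc p q, HasDerivAt φ₁ (φ₂ x) x)
    (hφ₂ : ContinuousOn φ₂ (Set.Icc p q))
    (hg : ∀ x ∈ Set.Icc p q, HasDerivAt g (g₁ x) x)
    (hg₁ : ContinuousOn g₁ (Set.Icc p q)) (hp : g p = 0) (hq : g q = 0)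
    (hgG : ∀ x ∈ Set.Icc p q, |g x| ≤ G) (hg₁G : ∀ x ∈ Set.Icc p q, |g₁ x| ≤ G)
    (hlow : ∀ x ∈ Set.Icc p q, m ≤ σ * φ₂ x) :
    ‖∫ x in p..q, Complex.exp (Complex.I * (φ x : ℂ)) * (g x : ℂ)‖ ≤
      G * (q - p + 2 * π) / √m := by
  have hG : 0 ≤ G := (abs_nonneg _).trans (hgG p ⟨le_rfl, hpq⟩)
  have hsm : 0 < √m := Real.sqrt_pos.2 hm
  have hss : √m * √m = m := Real.mul_self_sqrt hm.le
  have huIcc : Set.uIcc p q = Set.Icc p q := Set.uIcc_of_le hpq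
  have hW : ∀ x, 0 < φ₁ x ^ 2 + m := fun x => by positivity
  have hφ₁c : ContinuousOn φ₁ (Set.Icc p q) :=
    fun x hx => (hφ₁ x hx).continuousAt.continuousWithinAt
  have hφc : ContinuousOn φ (Set.Icc p q) :=
    fun x hx => (hφ x hx).continuousAt.continuousWithinAt
  have hgc : ContinuousOn g (Set.Icc p q) :=
    fun x hx => (hg x hx).continuousAt.continuousWithinAt
  have hec : ContinuousOn (fun x => Complex.exp (Complex.I * (φ x : ℂ))) (Set.Icc p q) := by
    fun_prop
  set u : ℝ → ℝ := fun x => g x * (φ₁ x / (φ₁ x ^ 2 + m)) with hu_def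
  set u' : ℝ → ℝ := fun x => g₁ x * (φ₁ x / (φ₁ x ^ 2 + m)) +
    g x * (φ₂ x * (m - φ₁ x ^ 2) / (φ₁ x ^ 2 + m) ^ 2) with hu'_def
  have hu : ∀ x ∈ Set.Icc p q, HasDerivAt u (u' x) x := by
    intro x hx
    have h1 := (hφ₁ x hx).div (((hφ₁ x hx).pow 2).add_const m) (hW x).ne'
    refine ((hg x hx).mul h1).congr_deriv ?_
    simp only [hu'_def]
    have := (hW x).ne'
    simp
    left
    ring
  have hWne : ∀ x ∈ Set.Icc p q, φ₁ x ^ 2 + m ≠ 0 := fun x _ => (hW x).ne'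
  have hWne2 : ∀ x ∈ Set.Icc p q, (φ₁ x ^ 2 + m) ^ 2 ≠ 0 := fun x _ => (pow_pos (hW x) 2).ne'
  have hu'c : ContinuousOn u' (Set.Icc p q) := by
    refine (hg₁.mul (hφ₁c.div (by fun_prop) hWne)).add
      (hgc.mul (ContinuousOn.div (by fun_prop) (by fun_prop) hWne2))
  have hmaj : ∫ x in p..q, σ * φ₂ x / (φ₁ x ^ 2 + m) ≤ π / √m := by
    have hd : ∀ x ∈ Set.uIcc p q, HasDerivAt (fun x => σ * (arctan (φ₁ x / √m) / √m))
        (σ * φ₂ x / (φ₁ x ^ 2 + m)) x := by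
      intro x hx
      rw [huIcc] at hx
      refine ((((hφ₁ x hx).div_const (√m)).arctan.div_const (√m)).const_mul σ).congr_deriv ?_
      have h1 : 1 + (φ₁ x / √m) ^ 2 = (φ₁ x ^ 2 + m) / m := by
        rw [div_pow, Real.sq_sqrt hm.le]; field_simp; ring
      rw [h1]
      have := (hW x).ne'
      field_simp
      rw [Real.sq_sqrt hm.le]
      ring
    rw [intervalIntegral.integral_eq_sub_of_hasDerivAt hd
      (ContinuousOn.intervalIntegrable (by
        rw [huIcc]; exact ContinuousOn.div (by fun_prop) (by fun_prop) hWne))]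
    rw [← mul_sub, ← sub_div, ← mul_div_assoc]
    gcongr
    refine (le_abs_self _).trans ?_
    rw [abs_mul, hσ, one_mul, abs_le]
    have := arctan_lt_pi_div_two (φ₁ q / √m)
    have := arctan_lt_pi_div_two (φ₁ p / √m)
    have := neg_pi_div_two_lt_arctan (φ₁ q / √m)
    have := neg_pi_div_two_lt_arctan (φ₁ p / √m)
    constructor <;> linarith
  have hsplit : ∫ x in p..q, Complex.exp (Complex.I * (φ x : ℂ)) * (g x : ℂ) =
      ∫ x in p..q, (Complex.I * (Complex.exp (Complex.I * (φ x : ℂ)) * (u' x : ℂ)) +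
        Complex.exp (Complex.I * (φ x : ℂ)) * ((g x * (m / (φ₁ x ^ 2 + m)) : ℝ) : ℂ)) := by
    have hgm : ContinuousOn (fun x => g x * (m / (φ₁ x ^ 2 + m))) (Set.Icc p q) :=
      hgc.mul (continuousOn_const.div (by fun_prop) hWne)
    have hucont : ContinuousOn u (Set.Icc p q) :=
      fun x hx => (hu x hx).continuousAt.continuousWithinAt
    rw [intervalIntegral.integral_add, intervalIntegral.integral_const_mul,
      ← integral_exp_mul_deriv (φ' := φ₁) (u := u) (huIcc ▸ hφ) (huIcc ▸ hu) (huIcc ▸ hφ₁c)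
        (huIcc ▸ hu'c) (by simp [hu_def, hp]) (by simp [hu_def, hq]),
      ← intervalIntegral.integral_add]
    · congr 1
      ext x
      rw [← mul_add, ← Complex.ofReal_add]
      congr 2
      have := (hW x).ne'
      simp only [hu_def]
      field_simp
    · apply ContinuousOn.intervalIntegrable; rw [huIcc]; fun_prop
    · apply ContinuousOn.intervalIntegrable; rw [huIcc]; fun_prop
    · apply ContinuousOn.intervalIntegrable; rw [huIcc]; fun_prop
    · apply ContinuousOn.intervalIntegrable; rw [huIcc]; fun_prop
  have hcont : ContinuousOn (fun x => σ * φ₂ x / (φ₁ x ^ 2 + m)) (Set.Icc p q) :=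
    ContinuousOn.div (by fun_prop) (by fun_prop) hWne
  rw [hsplit]
  have hbound : ‖∫ x in p..q, (Complex.I * (Complex.exp (Complex.I * (φ x : ℂ)) * (u' x : ℂ)) +
        Complex.exp (Complex.I * (φ x : ℂ)) * ((g x * (m / (φ₁ x ^ 2 + m)) : ℝ) : ℂ))‖ ≤
      ∫ x in p..q, (G / √m + 2 * G * (σ * φ₂ x / (φ₁ x ^ 2 + m))) := by
    refine intervalIntegral.norm_integral_le_of_norm_le hpq ?_ ?_
    · refine Filter.Eventually.of_forall fun x hx => ?_
      replace hx : x ∈ Set.Icc p q := Set.Ioc_subset_Icc_self hx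
      refine (norm_add_le _ _).trans ?_
      simp only [norm_mul, Complex.norm_I, norm_cexp_I_mul_ofReal, one_mul, Complex.norm_real,
        Real.norm_eq_abs]
      have hWx := hW x
      have hl := hlow x hx
      have hφ₂abs : |φ₂ x| = σ * φ₂ x := by
        rw [← abs_of_nonneg (hm.le.trans hl), abs_mul, hσ, one_mul]
      have e1 : |φ₁ x / (φ₁ x ^ 2 + m)| ≤ 1 / √m := by
        rw [abs_div, abs_of_pos hWx, div_le_div_iff₀ hWx hsm]
        nlinarith [sq_nonneg (|φ₁ x| - √m), sq_abs (φ₁ x), abs_nonneg (φ₁ x)]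
      have e2 : |φ₂ x * (m - φ₁ x ^ 2) / (φ₁ x ^ 2 + m) ^ 2| ≤
          σ * φ₂ x / (φ₁ x ^ 2 + m) := by
        rw [abs_div, abs_mul, hφ₂abs, abs_of_pos (pow_pos hWx 2), div_le_div_iff₀ (by positivity) hWx]
        have : |m - φ₁ x ^ 2| ≤ φ₁ x ^ 2 + m := by
          rw [abs_le]; constructor <;> nlinarith [sq_nonneg (φ₁ x)]
        have h0 : 0 ≤ σ * φ₂ x := hm.le.trans hl
        calc σ * φ₂ x * |m - φ₁ x ^ 2| * (φ₁ x ^ 2 + m)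
            ≤ σ * φ₂ x * (φ₁ x ^ 2 + m) * (φ₁ x ^ 2 + m) := by gcongr
          _ = _ := by ring
      have e3 : |m / (φ₁ x ^ 2 + m)| ≤ σ * φ₂ x / (φ₁ x ^ 2 + m) := by
        rw [abs_of_pos (div_pos hm hWx)]; gcongr
      have e4 : |u' x| ≤ G * (1 / √m) + G * (σ * φ₂ x / (φ₁ x ^ 2 + m)) := by
        refine (abs_add_le _ _).trans ?_
        rw [abs_mul, abs_mul]
        exact add_le_add (mul_le_mul (hg₁G x hx) e1 (abs_nonneg _) hG)
          (mul_le_mul (hgG x hx) e2 (abs_nonneg _) hG)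
      have e5 : |g x| * |m / (φ₁ x ^ 2 + m)| ≤ G * (σ * φ₂ x / (φ₁ x ^ 2 + m)) :=
        mul_le_mul (hgG x hx) e3 (abs_nonneg _) hG
      calc _ ≤ _ := add_le_add e4 e5
        _ = _ := by ring
    · apply ContinuousOn.intervalIntegrable; rw [huIcc]; fun_prop
  refine hbound.trans ?_
  rw [intervalIntegral.integral_add, intervalIntegral.integral_const,
    intervalIntegral.integral_const_mul]
  · have : G * (q - p + 2 * π) / √m = (q - p) • (G / √m) + 2 * G * (π / √m) := by
      rw [smul_eq_mul]; ring
    rw [this]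
    gcongr
  · apply ContinuousOn.intervalIntegrable; rw [huIcc]; fun_prop
  · apply ContinuousOn.intervalIntegrable; rw [huIcc]; fun_prop

lemma norm_oscillatory_integral_le_of_deriv {p q : ℝ} (hpq : p ≤ q)
    {φ φ₁ φ₂ φ₃ g g₁ g₂ : ℝ → ℝ} {A G : ℝ} (hA : 0 < A)
    (hφ : ∀ x ∈ Set.Icc p q, HasDerivAt φ (φ₁ x) x)
    (hφ₁ : ∀ x ∈ Set.Icc p q, HasDerivAt φ₁ (φ₂ x) x)
    (hφ₂ : ∀ x ∈ Set.Icc p q, HasDerivAt φ₂ (φ₃ x) x)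
    (hφ₃ : ContinuousOn φ₃ (Set.Icc p q))
    (hg : ∀ x ∈ Set.Icc p q, HasDerivAt g (g₁ x) x)
    (hg₁ : ∀ x ∈ Set.Icc p q, HasDerivAt g₁ (g₂ x) x)
    (hg₂ : ContinuousOn g₂ (Set.Icc p q))
    (hp : g p = 0) (hq : g q = 0) (hp₁ : g₁ p = 0) (hq₁ : g₁ q = 0)
    (hgG : ∀ x ∈ Set.Icc p q, |g x| ≤ G) (hg₁G : ∀ x ∈ Set.Icc p q, |g₁ x| ≤ G)
    (hg₂G : ∀ x ∈ Set.Icc p q, |g₂ x| ≤ G)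
    (hlow : ∀ x ∈ Set.Icc p q, A ≤ |φ₁ x|)
    (hup₂ : ∀ x ∈ Set.Icc p q, |φ₂ x| ≤ A) (hup₃ : ∀ x ∈ Set.Icc p q, |φ₃ x| ≤ A) :
    ‖∫ x in p..q, Complex.exp (Complex.I * (φ x : ℂ)) * (g x : ℂ)‖ ≤
      8 * G * (q - p) / A ^ 2 := by
  have hG : 0 ≤ G := (abs_nonneg _).trans (hgG p ⟨le_rfl, hpq⟩)
  have huIcc : Set.uIcc p q = Set.Icc p q := Set.uIcc_of_le hpq
  have hne : ∀ x ∈ Set.Icc p q, φ₁ x ≠ 0 := fun x hx h => by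
    have := hlow x hx
    rw [h, abs_zero] at this
    linarith
  have hφ₁c : ContinuousOn φ₁ (Set.Icc p q) :=
    fun x hx => (hφ₁ x hx).continuousAt.continuousWithinAt
  have hφ₂c : ContinuousOn φ₂ (Set.Icc p q) :=
    fun x hx => (hφ₂ x hx).continuousAt.continuousWithinAt
  have hgc : ContinuousOn g (Set.Icc p q) :=
    fun x hx => (hg x hx).continuousAt.continuousWithinAt
  have hg₁c : ContinuousOn g₁ (Set.Icc p q) :=
    fun x hx => (hg₁ x hx).continuousAt.continuousWithinAt
  set P : ℝ → ℝ := fun x => (φ₁ x)⁻¹ with hP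
  have hPd : ∀ x ∈ Set.Icc p q, HasDerivAt P (-(φ₂ x * P x ^ 2)) x := fun x hx =>
    ((hφ₁ x hx).inv (hne x hx)).congr_deriv (by simp only [hP]; field_simp)
  have hPc : ContinuousOn P (Set.Icc p q) :=
    fun x hx => (hPd x hx).continuousAt.continuousWithinAt
  set u₁ : ℝ → ℝ := fun x => g₁ x * P x - g x * φ₂ x * P x ^ 2 with hu₁
  set u₂ : ℝ → ℝ := fun x => P x ^ 2 * g₂ x - 3 * P x ^ 3 * φ₂ x * g₁ x - P x ^ 3 * φ₃ x * g x
    + 3 * P x ^ 4 * φ₂ x ^ 2 * g x with hu₂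
  have hd1 : ∀ x ∈ Set.Icc p q, HasDerivAt (fun x => g x * P x) (u₁ x) x := fun x hx =>
    ((hg x hx).mul (hPd x hx)).congr_deriv (by simp only [hu₁]; ring)
  have hd2 : ∀ x ∈ Set.Icc p q, HasDerivAt (fun x => u₁ x * P x) (u₂ x) x := fun x hx =>
    ((((hg₁ x hx).mul (hPd x hx)).sub (((hg x hx).mul (hφ₂ x hx)).mul
      ((hPd x hx).pow 2))).mul (hPd x hx)).congr_deriv (by simp [hu₂]; ring)
  have hu₁c : ContinuousOn u₁ (Set.Icc p q) := by fun_prop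
  have hu₂c : ContinuousOn u₂ (Set.Icc p q) := by fun_prop
  have hstep : ∀ v : ℝ → ℝ, ∫ x in p..q, Complex.exp (Complex.I * (φ x : ℂ)) * (v x : ℂ) =
      ∫ x in p..q, Complex.exp (Complex.I * (φ x : ℂ)) * ((φ₁ x * (v x * P x) : ℝ) : ℂ) := by
    intro v
    refine intervalIntegral.integral_congr fun x hx => ?_
    rw [huIcc] at hx
    have := hne x hx
    simp only [hP]
    congr 2
    field_simp
  rw [hstep g, integral_exp_mul_deriv (huIcc ▸ hφ) (huIcc ▸ hd1) (huIcc ▸ hφ₁c) (huIcc ▸ hu₁c)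
    (by simp [hp]) (by simp [hq]), hstep u₁, integral_exp_mul_deriv (huIcc ▸ hφ) (huIcc ▸ hd2)
    (huIcc ▸ hφ₁c) (huIcc ▸ hu₂c) (by simp [hu₁, hp, hp₁]) (by simp [hu₁, hq, hq₁])]
  simp only [norm_mul, Complex.norm_I, one_mul]
  have : ‖∫ x in p..q, Complex.exp (Complex.I * (φ x : ℂ)) * (u₂ x : ℂ)‖ ≤
      8 * G / A ^ 2 * |q - p| := by
    refine intervalIntegral.norm_integral_le_of_norm_le_const fun x hx => ?_
    rw [Set.uIoc_of_le hpq] at hx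
    replace hx : x ∈ Set.Icc p q := Set.Ioc_subset_Icc_self hx
    rw [norm_mul, norm_cexp_I_mul_ofReal, one_mul, Complex.norm_real, Real.norm_eq_abs]
    have hPA : |P x| ≤ A⁻¹ := by
      simp only [hP, abs_inv]
      exact inv_anti₀ hA (hlow x hx)
    have e1 : |P x ^ 2 * g₂ x| ≤ A⁻¹ ^ 2 * G := by
      rw [abs_mul, abs_pow]; gcongr; exact hg₂G x hx
    have e2 : |3 * P x ^ 3 * φ₂ x * g₁ x| ≤ 3 * A⁻¹ ^ 3 * A * G := by
      rw [abs_mul, abs_mul, abs_mul, abs_pow, abs_of_pos (three_pos : (0:ℝ) < 3)]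
      gcongr
      exacts [hup₂ x hx, hg₁G x hx]
    have e3 : |P x ^ 3 * φ₃ x * g x| ≤ A⁻¹ ^ 3 * A * G := by
      rw [abs_mul, abs_mul, abs_pow]
      gcongr
      exacts [hup₃ x hx, hgG x hx]
    have e4 : |3 * P x ^ 4 * φ₂ x ^ 2 * g x| ≤ 3 * A⁻¹ ^ 4 * A ^ 2 * G := by
      rw [abs_mul, abs_mul, abs_mul, abs_pow, abs_pow, abs_of_pos (three_pos : (0:ℝ) < 3)]
      gcongr
      exacts [hup₂ x hx, hgG x hx]
    have e5 : 8 * G / A ^ 2 = A⁻¹ ^ 2 * G + 3 * A⁻¹ ^ 3 * A * G + A⁻¹ ^ 3 * A * G +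
        3 * A⁻¹ ^ 4 * A ^ 2 * G := by
      field_simp; ring
    rw [e5]
    refine (abs_add_le _ _).trans (add_le_add ((abs_sub _ _).trans
      (add_le_add ((abs_sub _ _).trans (add_le_add e1 e2)) e3)) e4)
  rw [abs_of_nonneg (by linarith)] at this
  calc _ ≤ _ := this
    _ = _ := by ring

lemma exists_oscillatory_bound {a : ℝ} (ha : a ≠ 0) (ha1 : a ≠ 1) {g : ℝ → ℝ}
    (hg : ContDiffOn ℝ 2 g (Set.Ioi 0)) {p q : ℝ} (hp0 : 0 < p) (hpq : p ≤ q)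
    (hp : g p = 0) (hq : g q = 0) (hp₁ : deriv g p = 0) (hq₁ : deriv g q = 0) :
    ∃ C > 0, ∃ c > 0, c ≤ 1 ∧ ∀ A B : ℝ, A ≠ 0 →
      ‖∫ x in p..q, Complex.exp (Complex.I * ((A * x + B * x ^ a : ℝ) : ℂ)) * (g x : ℂ)‖ ≤
        C / √|A| ∧
      (|B| ≤ c * |A| →
        ‖∫ x in p..q, Complex.exp (Complex.I * ((A * x + B * x ^ a : ℝ) : ℂ)) * (g x : ℂ)‖ ≤
          C / A ^ 2) := by
  have hpos : ∀ x ∈ Set.Icc p q, 0 < x := fun x hx => hp0.trans_le hx.1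
  have hsub : Set.Icc p q ⊆ Set.Ioi 0 := hpos
  have hg1 : DifferentiableOn ℝ g (Set.Ioi 0) ∧ ContDiffOn ℝ 1 (deriv g) (Set.Ioi 0) := by
    have := (contDiffOn_succ_iff_deriv_of_isOpen (n := 1) isOpen_Ioi).1 (by norm_num; exact hg)
    exact ⟨this.1, this.2.2⟩
  have hg2 : DifferentiableOn ℝ (deriv g) (Set.Ioi 0) ∧
      ContDiffOn ℝ 0 (deriv (deriv g)) (Set.Ioi 0) := by
    have := (contDiffOn_succ_iff_deriv_of_isOpen (n := 0) isOpen_Ioi).1 (by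
      rw [zero_add]; exact hg1.2)
    exact ⟨this.1, this.2.2⟩
  have hgd : ∀ x ∈ Set.Icc p q, HasDerivAt g (deriv g x) x := fun x hx =>
    ((hg1.1 x (hsub hx)).differentiableAt (Ioi_mem_nhds (hpos x hx))).hasDerivAt
  have hgd1 : ∀ x ∈ Set.Icc p q, HasDerivAt (deriv g) (deriv (deriv g) x) x := fun x hx =>
    ((hg2.1 x (hsub hx)).differentiableAt (Ioi_mem_nhds (hpos x hx))).hasDerivAt
  have hg2c : ContinuousOn (deriv (deriv g)) (Set.Icc p q) := hg2.2.continuousOn.mono hsub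
  have hg1c : ContinuousOn (deriv g) (Set.Icc p q) := hg1.2.continuousOn.mono hsub
  have hg0c : ContinuousOn g (Set.Icc p q) := hg.continuousOn.mono hsub
  have hrc : ∀ k e : ℝ, ContinuousOn (fun x : ℝ => k * x ^ e) (Set.Icc p q) := fun k e =>
    continuousOn_const.mul (continuousOn_id.rpow_const fun x hx => Or.inl (hpos x hx).ne')
  obtain ⟨G₀, hG₀⟩ := isCompact_Icc.exists_bound_of_continuousOn hg0c
  obtain ⟨G₁, hG₁⟩ := isCompact_Icc.exists_bound_of_continuousOn hg1c
  obtain ⟨G₂, hG₂⟩ := isCompact_Icc.exists_bound_of_continuousOn hg2c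
  obtain ⟨D₁, hD₁⟩ := isCompact_Icc.exists_bound_of_continuousOn (hrc a (a - 1))
  obtain ⟨D₂, hD₂⟩ := isCompact_Icc.exists_bound_of_continuousOn (hrc (a * (a - 1)) (a - 1 - 1))
  obtain ⟨D₃, hD₃⟩ := isCompact_Icc.exists_bound_of_continuousOn
    (hrc (a * (a - 1) * (a - 1 - 1)) (a - 1 - 1 - 1))
  obtain ⟨x₀, hx₀, hmin⟩ := isCompact_Icc.exists_isMinOn (Set.nonempty_Icc.2 hpq)
    (hrc 1 (a - 1 - 1))
  set d : ℝ := |a * (a - 1)| * x₀ ^ (a - 1 - 1) with hd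
  have haa : a * (a - 1) ≠ 0 := mul_ne_zero ha (sub_ne_zero.2 ha1)
  have hd0 : 0 < d := mul_pos (abs_pos.2 haa) (rpow_pos_of_pos (hpos x₀ hx₀) _)
  have hdle : ∀ x ∈ Set.Icc p q, d ≤ |a * (a - 1)| * x ^ (a - 1 - 1) := fun x hx => by
    have := hmin hx
    simp only [one_mul, Set.mem_ofPred_eq] at this
    exact mul_le_mul_of_nonneg_left this (abs_nonneg _)
  set D : ℝ := 1 + |D₁| + |D₂| + |D₃| with hD
  set G : ℝ := 1 + |G₀| + |G₁| + |G₂| with hG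
  have hDp : 1 ≤ D := by rw [hD]; linarith [abs_nonneg D₁, abs_nonneg D₂, abs_nonneg D₃]
  have hGp : 1 ≤ G := by rw [hG]; linarith [abs_nonneg G₀, abs_nonneg G₁, abs_nonneg G₂]
  have hG0 : ∀ x ∈ Set.Icc p q, |g x| ≤ G := fun x hx => (hG₀ x hx).trans (by
    rw [hG]; linarith [le_abs_self G₀, abs_nonneg G₁, abs_nonneg G₂])
  have hG1 : ∀ x ∈ Set.Icc p q, |deriv g x| ≤ G := fun x hx => (hG₁ x hx).trans (by
    rw [hG]; linarith [le_abs_self G₁, abs_nonneg G₀, abs_nonneg G₂])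
  have hG2 : ∀ x ∈ Set.Icc p q, |deriv (deriv g) x| ≤ G := fun x hx => (hG₂ x hx).trans (by
    rw [hG]; linarith [le_abs_self G₂, abs_nonneg G₁, abs_nonneg G₀])
  have hD1 : ∀ x ∈ Set.Icc p q, |a * x ^ (a - 1)| ≤ D := fun x hx => (hD₁ x hx).trans (by
    rw [hD]; linarith [le_abs_self D₁, abs_nonneg D₂, abs_nonneg D₃])
  have hD2 : ∀ x ∈ Set.Icc p q, |a * (a - 1) * x ^ (a - 1 - 1)| ≤ D := fun x hx =>
    (hD₂ x hx).trans (by rw [hD]; linarith [le_abs_self D₂, abs_nonneg D₁, abs_nonneg D₃])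
  have hD3 : ∀ x ∈ Set.Icc p q, |a * (a - 1) * (a - 1 - 1) * x ^ (a - 1 - 1 - 1)| ≤ D :=
    fun x hx => (hD₃ x hx).trans (by
      rw [hD]; linarith [le_abs_self D₃, abs_nonneg D₂, abs_nonneg D₁])
  set c : ℝ := 1 / (2 * D) with hc
  have hc0 : 0 < c := by positivity
  have hcD : c * D = 1 / 2 := by rw [hc]; field_simp
  set L : ℝ := q - p with hL
  have hL0 : 0 ≤ L := by rw [hL]; linarith
  set C₁ : ℝ := 8 * G * L / (1 / 2) ^ 2 with hC₁
  set C₂ : ℝ := G * (L + 2 * π) / √(c * d) with hC₂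
  have hC₁0 : 0 ≤ C₁ := by positivity
  have hC₂0 : 0 < C₂ := by have := pi_pos; positivity
  have hC₁G : G * L ≤ C₁ := by
    have : 0 ≤ G * L := by positivity
    rw [hC₁, show 8 * G * L / (1 / 2) ^ 2 = 32 * (G * L) by ring]
    linarith
  have hφ : ∀ A B : ℝ, ∀ x ∈ Set.Icc p q, HasDerivAt (fun x => A * x + B * x ^ a)
      (A + B * (a * x ^ (a - 1))) x := fun A B x hx =>
    (((hasDerivAt_id x).const_mul A).add ((hasDerivAt_rpow_const
      (Or.inl (hpos x hx).ne')).const_mul B)).congr_deriv (by ring)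
  have hφ1 : ∀ A B : ℝ, ∀ x ∈ Set.Icc p q, HasDerivAt (fun x => A + B * (a * x ^ (a - 1)))
      (B * (a * (a - 1) * x ^ (a - 1 - 1))) x := fun A B x hx =>
    ((((hasDerivAt_rpow_const (Or.inl (hpos x hx).ne')).const_mul a).const_mul B).const_add
      A).congr_deriv (by ring)
  have hφ2 : ∀ B : ℝ, ∀ x ∈ Set.Icc p q, HasDerivAt (fun x => B * (a * (a - 1) * x ^ (a - 1 - 1)))
      (B * (a * (a - 1) * (a - 1 - 1) * x ^ (a - 1 - 1 - 1))) x := fun B x hx =>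
    (((hasDerivAt_rpow_const (Or.inl (hpos x hx).ne')).const_mul (a * (a - 1))).const_mul
      B).congr_deriv (by ring)
  refine ⟨C₁ + C₂, by positivity, c, hc0, ?_, ?_⟩
  · rw [hc, div_le_one (by positivity)]; linarith
  intro A B hA
  have hA0 : 0 < |A| := abs_pos.2 hA
  have hsA : 0 < √|A| := Real.sqrt_pos.2 hA0
  have hfar : |B| ≤ c * |A| →
      ‖∫ x in p..q, Complex.exp (Complex.I * ((A * x + B * x ^ a : ℝ) : ℂ)) * (g x : ℂ)‖ ≤
        C₁ / A ^ 2 := by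
    intro hB
    have hBD : ∀ v : ℝ, |v| ≤ D → |B * v| ≤ |A| / 2 := fun v hv => by
      rw [abs_mul]
      calc |B| * |v| ≤ c * |A| * D := by gcongr
        _ = |A| / 2 := by rw [mul_right_comm, hcD]; ring
    have := norm_oscillatory_integral_le_of_deriv hpq (A := |A| / 2) (G := G) (by positivity)
      (hφ A B) (hφ1 A B) (hφ2 B) (continuousOn_const.mul (hrc _ _)) hgd hgd1 hg2c hp hq hp₁ hq₁
      hG0 hG1 hG2 (fun x hx => by
        have h1 := hBD _ (hD1 x hx)
        have h2 := abs_sub_abs_le_abs_sub A (-(B * (a * x ^ (a - 1))))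
        rw [abs_neg, sub_neg_eq_add] at h2
        linarith) (fun x hx => hBD _ (hD2 x hx)) (fun x hx => hBD _ (hD3 x hx))
    refine this.trans (le_of_eq ?_)
    rw [hC₁, hL, ← sq_abs A]
    field_simp
  refine ⟨?_, fun hB => (hfar hB).trans ?_⟩
  · by_cases hB : |B| ≤ c * |A|
    · refine le_trans ?_ (div_le_div_of_nonneg_right (le_add_of_nonneg_right hC₂0.le) hsA.le)
      rcases le_total 1 |A| with h1 | h1
      · refine (hfar hB).trans (div_le_div_of_nonneg_left hC₁0 hsA ?_)
        rw [← sq_abs A, Real.sqrt_le_left (by positivity)]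
        calc |A| = |A| ^ 1 := (pow_one _).symm
          _ ≤ |A| ^ 4 := pow_le_pow_right₀ h1 (by norm_num)
          _ = _ := by ring
      · have hs1 : √|A| ≤ 1 := Real.sqrt_le_one.2 h1
        have h2 : ‖∫ x in p..q, Complex.exp (Complex.I * ((A * x + B * x ^ a : ℝ) : ℂ)) *
            (g x : ℂ)‖ ≤ G * |q - p| := by
          refine intervalIntegral.norm_integral_le_of_norm_le_const fun x hx => ?_
          rw [Set.uIoc_of_le hpq] at hx
          rw [norm_mul, norm_cexp_I_mul_ofReal, one_mul, Complex.norm_real]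
          exact hG0 x (Set.Ioc_subset_Icc_self hx)
        rw [abs_of_nonneg hL0] at h2
        refine (h2.trans hC₁G).trans ?_
        rw [le_div_iff₀ hsA]
        exact mul_le_of_le_one_right hC₁0 hs1
    · push Not at hB
      have hB0 : 0 < |B| := (mul_pos hc0 hA0).trans hB
      set σ : ℝ := ((SignType.sign (B * (a * (a - 1))) : SignType) : ℝ) with hσ
      have hBa : B * (a * (a - 1)) ≠ 0 := mul_ne_zero (abs_pos.1 hB0) haa
      have hσ1 : |σ| = 1 := by
        rcases lt_or_gt_of_ne hBa with h | h
        · simp [hσ, sign_neg h]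
        · simp [hσ, sign_pos h]
      have hσ2 : σ * (B * (a * (a - 1))) = |B| * |a * (a - 1)| := by
        rw [hσ, sign_mul_self, abs_mul]
      have := norm_oscillatory_integral_le_of_deriv2 hpq (m := |B| * d) (G := G)
        (by positivity) hσ1 (hφ A B) (hφ1 A B) (continuousOn_const.mul (hrc _ _)) hgd hg1c hp hq
        hG0 hG1 (fun x hx => by
          calc |B| * d ≤ |B| * (|a * (a - 1)| * x ^ (a - 1 - 1)) := by
                gcongr; exact hdle x hx
            _ = σ * (B * (a * (a - 1))) * x ^ (a - 1 - 1) := by rw [hσ2]; ring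
            _ = _ := by ring)
      refine this.trans ?_
      refine le_trans ?_ (div_le_div_of_nonneg_right (le_add_of_nonneg_left hC₁0) hsA.le)
      rw [hC₂, div_div, ← Real.sqrt_mul (by positivity)]
      have := pi_pos
      have hAB : c * d * |A| ≤ |B| * d := by
        rw [mul_right_comm]
        gcongr
      gcongr
  · gcongr
    linarith

lemma integral_norm_sq_le_of_integral_kernel_le {X Y : Type*} [MeasurableSpace X]
    [MeasurableSpace Y] {μ : Measure X} {ν : Measure Y} [IsFiniteMeasure μ] [IsFiniteMeasure ν]
    {E : X → Y → ℂ} (hE : Measurable (Function.uncurry E)) (hE1 : ∀ x y, ‖E x y‖ ≤ 1)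
    {f : Y → ℂ} (hf : Measurable f) {F : ℝ} (hF : ∀ y, ‖f y‖ ≤ F) {M : ℝ} (hM : 0 < M)
    (hK : ∀ x, ∫ x', ‖∫ y, E x y * (starRingEnd ℂ) (E x' y) ∂ν‖ ∂μ ≤ M) :
    ∫ x, ‖∫ y, E x y * f y ∂ν‖ ^ 2 ∂μ ≤ M * ∫ y, ‖f y‖ ^ 2 ∂ν := by
  set V : ℝ := ν.real Set.univ with hV
  set U : ℝ := μ.real Set.univ with hU
  have hconj : Measurable (starRingEnd ℂ) := Complex.continuous_conj.measurable
  have hF2 : ∀ y, ‖f y‖ ≤ |F| := fun y => (hF y).trans (le_abs_self F)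
  set h : X → ℂ := fun x => ∫ y, E x y * f y ∂ν with hh
  have hhm : Measurable h := by
    refine (StronglyMeasurable.integral_prod_right (f := fun x y => E x y * f y) ?_).measurable
    exact (hE.mul (hf.comp measurable_snd)).stronglyMeasurable
  have hhb : ∀ x, ‖h x‖ ≤ |F| * V := fun x =>
    norm_integral_le_of_norm_le_const (Filter.Eventually.of_forall fun y => by
      rw [norm_mul]
      calc ‖E x y‖ * ‖f y‖ ≤ 1 * |F| := by gcongr; exacts [hE1 x y, hF2 y]
        _ = |F| := one_mul _)
  set H : ℝ := |F| * V with hH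
  have hH0 : 0 ≤ H := by positivity
  set G : Y → ℂ := fun y => ∫ x, (starRingEnd ℂ) (h x) * E x y ∂μ with hG
  have hhE : Measurable (fun p : X × Y => (starRingEnd ℂ) (h p.1) * E p.1 p.2) :=
    (hconj.comp (hhm.comp measurable_fst)).mul hE
  have hGm : Measurable G := by
    refine (StronglyMeasurable.integral_prod_left
      (f := fun x y => (starRingEnd ℂ) (h x) * E x y) ?_).measurable
    exact hhE.stronglyMeasurable
  have hGb : ∀ y, ‖G y‖ ≤ H * U := fun y =>
    norm_integral_le_of_norm_le_const (Filter.Eventually.of_forall fun x => by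
      rw [norm_mul, RCLike.norm_conj]
      calc ‖h x‖ * ‖E x y‖ ≤ H * 1 := by gcongr; exacts [hhb x, hE1 x y]
        _ = H := mul_one _)
  set K : X → X → ℂ := fun x x' => ∫ y, E x y * (starRingEnd ℂ) (E x' y) ∂ν with hKdef
  have hEE : Measurable (fun p : (X × X) × Y => E p.1.1 p.2 * (starRingEnd ℂ) (E p.1.2 p.2)) :=
    (hE.comp ((measurable_fst.comp measurable_fst).prodMk measurable_snd)).mul
      (hconj.comp (hE.comp ((measurable_snd.comp measurable_fst).prodMk measurable_snd)))
  have hKm : Measurable (fun p : X × X => K p.1 p.2) :=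
    (hEE.stronglyMeasurable.integral_prod_right').measurable
  have hKb : ∀ x x', ‖K x x'‖ ≤ 1 * V := fun x x' =>
    norm_integral_le_of_norm_le_const (Filter.Eventually.of_forall fun y => by
      rw [norm_mul, RCLike.norm_conj]
      exact mul_le_one₀ (hE1 x y) (norm_nonneg _) (hE1 x' y))
  have hKsymm : ∀ x x', ‖K x x'‖ = ‖K x' x‖ := fun x x' => by
    rw [← RCLike.norm_conj, hKdef]
    simp only
    rw [← integral_conj]
    congr 2
    ext y
    simp [mul_comm]
  -- the square function of `G` is controlled by the kernel
  have hGsq : ∫ y, ‖G y‖ ^ 2 ∂ν ≤ M * ∫ x, ‖h x‖ ^ 2 ∂μ := by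
    have hint : Integrable (fun p : (X × X) × Y => ((starRingEnd ℂ) (h p.1.1) * E p.1.1 p.2) *
        (starRingEnd ℂ) ((starRingEnd ℂ) (h p.1.2) * E p.1.2 p.2)) ((μ.prod μ).prod ν) := by
      refine Integrable.of_bound (Measurable.aestronglyMeasurable ?_) (H * 1 * (H * 1))
        (Filter.Eventually.of_forall fun p => ?_)
      · exact (hhE.comp ((measurable_fst.comp measurable_fst).prodMk measurable_snd)).mul
          (hconj.comp (hhE.comp ((measurable_snd.comp measurable_fst).prodMk measurable_snd)))
      · simp only [norm_mul, RCLike.norm_conj]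
        gcongr
        exacts [hhb _, hE1 _ _, hhb _, hE1 _ _]
    have e1 : ((∫ y, ‖G y‖ ^ 2 ∂ν : ℝ) : ℂ) =
        ∫ p : X × X, (starRingEnd ℂ) (h p.1) * h p.2 * K p.1 p.2 ∂(μ.prod μ) := by
      rw [← integral_complex_ofReal]
      have : ∀ y, ((‖G y‖ ^ 2 : ℝ) : ℂ) = ∫ p : X × X, ((starRingEnd ℂ) (h p.1) * E p.1 y) *
        (starRingEnd ℂ) ((starRingEnd ℂ) (h p.2) * E p.2 y) ∂(μ.prod μ) := fun y => by
        rw [integral_prod_mul (fun x => (starRingEnd ℂ) (h x) * E x y)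
          (fun x => (starRingEnd ℂ) ((starRingEnd ℂ) (h x) * E x y)), integral_conj,
          Complex.mul_conj, Complex.normSq_eq_norm_sq]
      simp_rw [this]
      rw [← integral_integral_swap (f := fun (p : X × X) (y : Y) =>
        ((starRingEnd ℂ) (h p.1) * E p.1 y) *
        (starRingEnd ℂ) ((starRingEnd ℂ) (h p.2) * E p.2 y)) hint]
      congr 1
      ext p
      rw [hKdef]
      simp only
      rw [← integral_const_mul]
      congr 1
      ext y
      simp only [map_mul, RCLike.conj_conj]
      ring
    have e2 : ∫ y, ‖G y‖ ^ 2 ∂ν ≤ ∫ p : X × X,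
        (‖h p.1‖ ^ 2 * ‖K p.1 p.2‖ + ‖h p.2‖ ^ 2 * ‖K p.1 p.2‖) / 2 ∂(μ.prod μ) := by
      have h0 : 0 ≤ ∫ y, ‖G y‖ ^ 2 ∂ν := integral_nonneg fun y => by positivity
      rw [← abs_of_nonneg h0, ← Real.norm_eq_abs, ← Complex.norm_real, e1]
      refine norm_integral_le_of_norm_le ?_ (Filter.Eventually.of_forall fun p => ?_)
      · refine Integrable.of_bound (Measurable.aestronglyMeasurable (by fun_prop))
          ((H ^ 2 * (1 * V) + H ^ 2 * (1 * V)) / 2) (Filter.Eventually.of_forall fun p => ?_)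
        rw [Real.norm_of_nonneg (by positivity)]
        gcongr
        exacts [hhb _, hKb _ _, hhb _, hKb _ _]
      · simp only [norm_mul, RCLike.norm_conj]
        nlinarith [mul_nonneg (sq_nonneg (‖h p.1‖ - ‖h p.2‖)) (norm_nonneg (K p.1 p.2))]
    have hi1 : Integrable (fun p : X × X => ‖h p.1‖ ^ 2 * ‖K p.1 p.2‖) (μ.prod μ) := by
      refine Integrable.of_bound (Measurable.aestronglyMeasurable (by fun_prop))
          (H ^ 2 * (1 * V)) (Filter.Eventually.of_forall fun p => ?_)
      rw [Real.norm_of_nonneg (by positivity)]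
      gcongr
      exacts [hhb _, hKb _ _]
    have e3 : ∫ p : X × X, ‖h p.2‖ ^ 2 * ‖K p.1 p.2‖ ∂(μ.prod μ) =
        ∫ p : X × X, ‖h p.1‖ ^ 2 * ‖K p.1 p.2‖ ∂(μ.prod μ) := by
      rw [← integral_prod_swap]
      simp only [Prod.fst_swap, Prod.snd_swap]
      congr 1
      ext p
      rw [hKsymm]
    have hi2 : Integrable (fun p : X × X => ‖h p.2‖ ^ 2 * ‖K p.1 p.2‖) (μ.prod μ) := by
      refine hi1.swap.congr (Filter.Eventually.of_forall fun p => ?_)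
      simp only [Function.comp_apply, Prod.fst_swap, Prod.snd_swap]
      rw [hKsymm]
    have hhi : Integrable (fun x => M * ‖h x‖ ^ 2) μ := by
      refine Integrable.of_bound (Measurable.aestronglyMeasurable (by fun_prop))
          (M * H ^ 2) (Filter.Eventually.of_forall fun p => ?_)
      rw [Real.norm_of_nonneg (by positivity)]
      gcongr
      exact hhb _
    rw [integral_div, integral_add hi1 hi2, e3, add_self_div_two] at e2
    refine e2.trans ?_
    rw [integral_prod _ hi1, ← integral_const_mul]
    refine integral_mono hi1.integral_prod_left hhi fun x => ?_
    simp only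
    rw [integral_const_mul, mul_comm]
    gcongr
    exact hK x
  have hpair : ((∫ x, ‖h x‖ ^ 2 ∂μ : ℝ) : ℂ) = ∫ y, G y * f y ∂ν := by
    rw [← integral_complex_ofReal]
    have : ∀ x, ((‖h x‖ ^ 2 : ℝ) : ℂ) = ∫ y, (starRingEnd ℂ) (h x) * E x y * f y ∂ν := fun x => by
      simp_rw [mul_assoc]
      rw [integral_const_mul, ← Complex.normSq_eq_norm_sq, mul_comm, Complex.mul_conj]
    simp_rw [this]
    rw [integral_integral_swap]
    · simp_rw [integral_mul_const]
      rfl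
    · refine Integrable.of_bound (Measurable.aestronglyMeasurable
        (hhE.mul (hf.comp measurable_snd))) (H * 1 * |F|) (Filter.Eventually.of_forall fun p => ?_)
      simp only [Function.uncurry, norm_mul, RCLike.norm_conj]
      gcongr
      exacts [hhb _, hE1 _ _, hF2 _]
  have hif : Integrable (fun y => M / 2 * ‖f y‖ ^ 2) ν := by
    refine Integrable.of_bound (Measurable.aestronglyMeasurable (by fun_prop))
      (M / 2 * |F| ^ 2) (Filter.Eventually.of_forall fun y => ?_)
    rw [Real.norm_of_nonneg (by positivity)]
    gcongr
    exact hF2 y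
  have hiG : Integrable (fun y => 1 / (2 * M) * ‖G y‖ ^ 2) ν := by
    refine Integrable.of_bound (Measurable.aestronglyMeasurable (by fun_prop))
      (1 / (2 * M) * (H * U) ^ 2) (Filter.Eventually.of_forall fun y => ?_)
    rw [Real.norm_of_nonneg (by positivity)]
    gcongr
    exact hGb y
  have hyoung : ∫ x, ‖h x‖ ^ 2 ∂μ ≤
      M / 2 * ∫ y, ‖f y‖ ^ 2 ∂ν + 1 / (2 * M) * ∫ y, ‖G y‖ ^ 2 ∂ν := by
    have h0 : 0 ≤ ∫ x, ‖h x‖ ^ 2 ∂μ := integral_nonneg fun y => by positivity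
    rw [← integral_const_mul, ← integral_const_mul, ← integral_add hif hiG,
      ← abs_of_nonneg h0, ← Real.norm_eq_abs, ← Complex.norm_real, hpair]
    refine norm_integral_le_of_norm_le (hif.add hiG) (Filter.Eventually.of_forall fun y => ?_)
    have key : M / 2 * ‖f y‖ ^ 2 + 1 / (2 * M) * ‖G y‖ ^ 2 - ‖G y‖ * ‖f y‖ =
        1 / (2 * M) * (M * ‖f y‖ - ‖G y‖) ^ 2 := by field_simp; ring
    have : 0 ≤ 1 / (2 * M) * (M * ‖f y‖ - ‖G y‖) ^ 2 := by positivity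
    rw [norm_mul]
    linarith
  have : 1 / (2 * M) * ∫ y, ‖G y‖ ^ 2 ∂ν ≤ 1 / 2 * ∫ x, ‖h x‖ ^ 2 ∂μ := by
    calc _ ≤ 1 / (2 * M) * (M * ∫ x, ‖h x‖ ^ 2 ∂μ) := by gcongr
      _ = _ := by field_simp
  linarith

/-- A majorant for the rescaled dyadic convolution kernels. -/
def kernelMajorant (z : ℝ) : ℝ := if |z| ≤ 1 then |z| ^ (-(1 / 2) : ℝ) else |z| ^ (-2 : ℝ)

lemma kernelMajorant_nonneg (z : ℝ) : 0 ≤ kernelMajorant z := by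
  unfold kernelMajorant
  split_ifs <;> positivity

lemma integrable_comp_abs {f : ℝ → ℝ} (hf : IntegrableOn f (Set.Ioi 0)) :
    Integrable (fun x => f |x|) := by
  have h1 : IntegrableOn (fun x => f |x|) (Set.Ioi 0) :=
    hf.congr_fun (fun x hx => by simp only [abs_of_pos (Set.mem_Ioi.1 hx)]) measurableSet_Ioi
  have h2 : IntegrableOn (fun x => f |x|) (Set.Iio 0) := by
    simpa using h1.comp_neg
  rw [← integrableOn_univ, ← Set.Iio_union_Ici (a := (0 : ℝ))]
  exact h2.union ((integrableOn_Ici_iff_integrableOn_Ioi (by simp)).2 h1)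

lemma integrable_kernelMajorant : Integrable kernelMajorant := by
  refine integrable_comp_abs
    (f := fun z => if z ≤ 1 then z ^ (-(1 / 2) : ℝ) else z ^ (-2 : ℝ)) ?_
  rw [← Set.Ioc_union_Ioi_eq_Ioi (zero_le_one' ℝ)]
  refine IntegrableOn.union ?_ ?_
  · refine IntegrableOn.congr_fun (f := fun z : ℝ => z ^ (-(1 / 2) : ℝ)) ?_
      (fun z hz => by simp only [if_pos hz.2]) measurableSet_Ioc
    rw [← intervalIntegrable_iff_integrableOn_Ioc_of_le zero_le_one]
    exact intervalIntegral.intervalIntegrable_rpow' (by norm_num)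
  · exact IntegrableOn.congr_fun (f := fun z : ℝ => z ^ (-2 : ℝ))
      (integrableOn_Ioi_rpow_of_lt (by norm_num) zero_lt_one)
      (fun z hz => by simp only [if_neg (not_le.2 (Set.mem_Ioi.1 hz))]) measurableSet_Ioi

lemma exists_oscillatory_bound_kernelMajorant {a : ℝ} (ha : a ≠ 0) (ha1 : a ≠ 1) {g : ℝ → ℝ}
    (hg : ContDiffOn ℝ 2 g (Set.Ioi 0)) {p q : ℝ} (hp0 : 0 < p) (hpq : p ≤ q)
    (hp : g p = 0) (hq : g q = 0) (hp₁ : deriv g p = 0) (hq₁ : deriv g q = 0) :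
    ∃ C > 0, ∃ c > 0, c ≤ 1 ∧ ∀ A B Y : ℝ, A ≠ 0 → 1 ≤ Y → |B| ≤ c * Y →
      ‖∫ x in p..q, Complex.exp (Complex.I * ((A * x + B * x ^ a : ℝ) : ℂ)) * (g x : ℂ)‖ ≤
        C / √Y * kernelMajorant (A / Y) := by
  obtain ⟨C, hC, c, hc, hc1, h⟩ := exists_oscillatory_bound ha ha1 hg hp0 hpq hp hq hp₁ hq₁
  refine ⟨C, hC, c, hc, hc1, fun A B Y hA hY hB => ?_⟩
  have hY0 : 0 < Y := zero_lt_one.trans_le hY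
  have hA0 : 0 < |A| := abs_pos.2 hA
  have habs : |A / Y| = |A| / Y := by rw [abs_div, abs_of_pos hY0]
  rw [kernelMajorant, habs]
  split_ifs with hAY
  · refine (h A B hA).1.trans (le_of_eq ?_)
    rw [rpow_neg (by positivity), ← Real.sqrt_eq_rpow, Real.sqrt_div hA0.le]
    have := Real.sqrt_pos.2 hY0
    field_simp
  · rw [div_le_one hY0, not_le] at hAY
    refine ((h A B hA).2 (hB.trans (by gcongr))).trans ?_
    rw [rpow_neg (by positivity), rpow_two, div_pow, ← sq_abs A, inv_div, div_mul_div_comm]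
    have h1 : √Y ≤ Y ^ 2 := by
      rw [Real.sqrt_le_left (by positivity)]
      calc Y = Y ^ 1 := (pow_one _).symm
        _ ≤ Y ^ 4 := pow_le_pow_right₀ hY (by norm_num)
        _ = _ := by ring
    have := Real.sqrt_pos.2 hY0
    rw [div_le_div_iff₀ (by positivity) (by positivity)]
    calc C * (√Y * |A| ^ 2) = C * √Y * |A| ^ 2 := by ring
      _ ≤ C * Y ^ 2 * |A| ^ 2 := by gcongr

/-- The part of the oscillatory kernel living at frequencies comparable to `l`. -/
def dyadicKernel (a s : ℝ) (χ t : ℝ → ℝ) (ε l r ρ : ℝ) : ℂ :=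
  ((1 - χ r : ℝ) : ℂ) * (Complex.exp (Complex.I * ((ε * r * ρ + t r * ρ ^ a : ℝ) : ℂ)) *
    ((ρ ^ (-s) * (χ (ρ / l / 2) - χ (ρ / l)) : ℝ) : ℂ))

section dyadicKernel

variable {a s : ℝ} {χ t : ℝ → ℝ} {ε l : ℝ}

lemma measurable_dyadicKernel (hχ : Measurable χ) (ht : Measurable t) :
    Measurable (Function.uncurry (dyadicKernel a s χ t ε l)) := by
  unfold dyadicKernel Function.uncurry
  fun_prop

lemma cutoff_sub_eq_zero_of_notMem (hχ0 : ∀ x : ℝ, x ∉ Set.Ioo (-2 : ℝ) 2 → χ x = 0)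
    (hχ1 : ∀ x ∈ Set.Icc (-1 : ℝ) 1, χ x = 1) {u : ℝ} (hu0 : 0 < u) (hu : u ∉ Set.Ioo (1 : ℝ) 4) :
    χ (u / 2) - χ u = 0 := by
  rcases le_or_gt u 1 with h | h
  · rw [hχ1 _ ⟨by linarith, by linarith⟩, hχ1 _ ⟨by linarith, by linarith⟩, sub_self]
  · have h4 : 4 ≤ u := not_lt.1 fun h' => hu ⟨h, h'⟩
    rw [hχ0 _ fun h' => by linarith [h'.2], hχ0 _ fun h' => by linarith [h'.2], sub_self]

lemma norm_dyadicKernel_le_one (hs : 0 < s) (hl : 1 ≤ l)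
    (hχ1 : ∀ x ∈ Set.Icc (-1 : ℝ) 1, χ x = 1) (hχ : ∀ x, χ x ∈ Set.Icc (0 : ℝ) 1) (r ρ : ℝ) :
    ‖dyadicKernel a s χ t ε l r ρ‖ ≤ 1 := by
  have hl0 : 0 < l := zero_lt_one.trans_le hl
  have hcut : |χ (ρ / l / 2) - χ (ρ / l)| ≤ 1 := by
    have h1 := hχ (ρ / l / 2)
    have h2 := hχ (ρ / l)
    rw [abs_le]
    constructor <;> linarith [h1.1, h1.2, h2.1, h2.2]
  have h1 : |1 - χ r| ≤ 1 := by
    have := hχ r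
    rw [abs_le]
    constructor <;> linarith [this.1, this.2]
  have h2 : |ρ ^ (-s) * (χ (ρ / l / 2) - χ (ρ / l))| ≤ 1 := by
    by_cases hρ : |ρ| ≤ l
    · have h3 : |ρ / l| ≤ 1 := by rw [abs_div, abs_of_pos hl0, div_le_one hl0]; exact hρ
      rw [abs_le] at h3
      rw [hχ1 (ρ / l) h3, hχ1 (ρ / l / 2) ⟨by linarith [h3.1], by linarith [h3.2]⟩]
      simp
    · rw [abs_mul]
      refine mul_le_one₀ ((abs_rpow_le_abs_rpow _ _).trans ?_) (abs_nonneg _) hcut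
      exact rpow_le_one_of_one_le_of_nonpos (hl.trans (not_le.1 hρ).le) (by linarith)
  rw [dyadicKernel, norm_mul, norm_mul, norm_cexp_I_mul_ofReal, one_mul, Complex.norm_real,
    Complex.norm_real]
  exact mul_le_one₀ h1 (norm_nonneg _) h2

lemma integral_dyadicKernel_mul_conj (hl : 0 < l) (r r' : ℝ) :
    ∫ ρ in Set.Ioc l (l * 4), dyadicKernel a s χ t ε l r ρ *
        (starRingEnd ℂ) (dyadicKernel a s χ t ε l r' ρ) =
      (((1 - χ r) * (1 - χ r') * (l * (l ^ (-s)) ^ 2) : ℝ) : ℂ) *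
        ∫ u in (1 : ℝ)..4, Complex.exp (Complex.I *
          ((ε * l * (r - r') * u + (t r - t r') * l ^ a * u ^ a : ℝ) : ℂ)) *
          (((u ^ (-s) * (χ (u / 2) - χ u)) ^ 2 : ℝ) : ℂ) := by
  rw [← intervalIntegral.integral_of_le (by linarith)]
  have h := intervalIntegral.integral_comp_mul_left (a := 1) (b := 4) (c := l)
    (fun ρ => dyadicKernel a s χ t ε l r ρ * (starRingEnd ℂ) (dyadicKernel a s χ t ε l r' ρ)) hl.ne'
  rw [mul_one, eq_inv_smul_iff₀ hl.ne'] at h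
  rw [← h, ← intervalIntegral.integral_const_mul, Complex.real_smul,
    ← intervalIntegral.integral_const_mul]
  refine intervalIntegral.integral_congr fun u hu => ?_
  rw [Set.uIcc_of_le (by norm_num)] at hu
  have hu0 : 0 ≤ u := by linarith [hu.1]
  simp only [dyadicKernel, map_mul, Complex.conj_ofReal, ← Complex.exp_conj, Complex.conj_I,
    mul_div_cancel_left₀ u hl.ne', mul_rpow hl.le hu0]
  have hexp : Complex.exp (Complex.I *
        ((ε * l * (r - r') * u + (t r - t r') * l ^ a * u ^ a : ℝ) : ℂ)) =
      Complex.exp (Complex.I * ((ε * r * (l * u) + t r * (l ^ a * u ^ a) : ℝ) : ℂ)) *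
      Complex.exp (-Complex.I * ((ε * r' * (l * u) + t r' * (l ^ a * u ^ a) : ℝ) : ℂ)) := by
    rw [← Complex.exp_add]
    congr 1
    push_cast
    ring
  rw [hexp]
  push_cast
  ring

end dyadicKernel

lemma exists_integral_dyadicKernel_le {a : ℝ} (ha : 0 < a) (ha1 : a ≠ 1) {s : ℝ} (hs : 0 < s)
    {χ : ℝ → ℝ} (hχsm : ContDiff ℝ (⊤ : ℕ∞) χ)
    (hχ0 : ∀ x : ℝ, x ∉ Set.Ioo (-2 : ℝ) 2 → χ x = 0)
    (hχ1 : ∀ x ∈ Set.Icc (-1 : ℝ) 1, χ x = 1) (hχrange : ∀ x, χ x ∈ Set.Icc (0 : ℝ) 1) :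
    ∃ M > 0, ∀ t : ℝ → ℝ, Measurable t → (∀ r, t r ∈ Set.Ioo (-1 : ℝ) 1) →
      ∀ ε : ℝ, |ε| = 1 → ∀ l : ℝ, 1 ≤ l → ∀ R : ℝ, ∀ f : ℝ → ℂ, Measurable f →
      ∀ F : ℝ, (∀ ρ, ‖f ρ‖ ≤ F) →
      ∫ r in Set.Ioc 0 R, ‖∫ ρ in Set.Ioc l (l * 4), dyadicKernel a s χ t ε l r ρ * f ρ‖ ^ 2 ≤
        M * l ^ (a / 2 - 2 * s) * ∫ ρ in Set.Ioc l (l * 4), ‖f ρ‖ ^ 2 := by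
  set b : ℝ → ℝ := fun u => u ^ (-s) * (χ (u / 2) - χ u) with hb
  have hbs : ContDiffOn ℝ 2 b (Set.Ioi 0) := by
    have hχ2 : ContDiff ℝ 2 χ := by exact_mod_cast contDiff_infty.1 hχsm 2
    refine ContDiffOn.mul (fun x hx => ?_) ?_
    · exact (contDiffAt_rpow_const_of_ne (Set.mem_Ioi.1 hx).ne').contDiffWithinAt
    · exact ((hχ2.comp (contDiff_id.div_const 2)).sub hχ2).contDiffOn
  have hgs : ContDiffOn ℝ 2 (fun u => b u ^ 2) (Set.Ioi 0) := hbs.pow 2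
  have hb0 : ∀ u : ℝ, 0 < u → u ∉ Set.Ioo (1 : ℝ) 4 → b u = 0 := fun u hu hu' => by
    simp only [hb]
    rw [cutoff_sub_eq_zero_of_notMem hχ0 hχ1 hu hu', mul_zero]
  have hgd : ∀ u : ℝ, 0 < u → u ∉ Set.Ioo (1 : ℝ) 4 → deriv (fun u => b u ^ 2) u = 0 :=
    fun u hu hu' => by
      have hd : DifferentiableAt ℝ b u :=
        (hbs.differentiableOn (by norm_num) u hu).differentiableAt (Ioi_mem_nhds hu)
      have hd2 : HasDerivAt (fun u => b u ^ 2) _ u := hd.hasDerivAt.pow 2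
      rw [hd2.deriv, hb0 u hu hu']
      simp
  obtain ⟨C, hC, c, hc, hc1, hosc⟩ := exists_oscillatory_bound_kernelMajorant ha.ne' ha1 hgs
    (p := 1) (q := 4) one_pos (by norm_num) (by simp [hb0 1]) (by simp [hb0 4])
    (hgd 1 (by norm_num) (by simp)) (hgd 4 (by norm_num) (by simp))
  set N : ℝ := 1 + ∫ z, kernelMajorant z with hN
  have hN0 : 0 < N := by
    have : 0 ≤ ∫ z, kernelMajorant z := integral_nonneg kernelMajorant_nonneg
    linarith
  refine ⟨C * √(2 / c) * N, by positivity, ?_⟩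
  intro t ht htr ε hε l hl R f hf F hF
  have hl0 : 0 < l := zero_lt_one.trans_le hl
  set Y : ℝ := 2 / c * l ^ a with hY
  have hY1 : 1 ≤ Y := by
    have h1 : 1 ≤ 2 / c := by rw [le_div_iff₀ hc]; linarith
    have h2 : 1 ≤ l ^ a := one_le_rpow hl ha.le
    rw [hY]
    nlinarith
  have hY0 : 0 < Y := zero_lt_one.trans_le hY1
  have hsY : 0 < √Y := Real.sqrt_pos.2 hY0
  refine integral_norm_sq_le_of_integral_kernel_le
    (measurable_dyadicKernel hχsm.continuous.measurable ht)
    (norm_dyadicKernel_le_one hs hl hχ1 hχrange) hf hF (by positivity) fun r => ?_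
  set k : ℝ → ℝ := fun x => l * (l ^ (-s)) ^ 2 * (C / √Y) * kernelMajorant (l / Y * x) with hk
  have hk0 : ∀ x, 0 ≤ k x := fun x => by
    have := kernelMajorant_nonneg (l / Y * x)
    positivity
  have hlY : l / Y ≠ 0 := by positivity
  have hki : Integrable k := (integrable_kernelMajorant.comp_mul_left' hlY).const_mul _
  have hpt : ∀ r' : ℝ, r' ≠ r → ‖∫ ρ in Set.Ioc l (l * 4), dyadicKernel a s χ t ε l r ρ *
        (starRingEnd ℂ) (dyadicKernel a s χ t ε l r' ρ)‖ ≤ k (r - r') := by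
    intro r' hr'
    rw [integral_dyadicKernel_mul_conj hl0, norm_mul, Complex.norm_real, Real.norm_eq_abs]
    have hε0 : ε ≠ 0 := by
      rintro rfl
      simp at hε
    have hA : ε * l * (r - r') ≠ 0 := mul_ne_zero (mul_ne_zero hε0 hl0.ne') (sub_ne_zero.2 hr'.symm)
    have hB : |(t r - t r') * l ^ a| ≤ c * Y := by
      have h1 := htr r
      have h2 := htr r'
      have h3 : |t r - t r'| ≤ 2 := by
        rw [abs_le]
        constructor <;> linarith [h1.1, h1.2, h2.1, h2.2]
      have h4 : 0 ≤ l ^ a := by positivity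
      rw [abs_mul, abs_of_nonneg h4, hY, ← mul_assoc, mul_div_cancel₀ _ hc.ne']
      gcongr
    have h1 := hosc _ _ Y hA hY1 hB
    have h2 : kernelMajorant (ε * l * (r - r') / Y) = kernelMajorant (l / Y * (r - r')) := by
      have : |ε * l * (r - r') / Y| = |l / Y * (r - r')| := by
        rw [mul_assoc, mul_div_assoc, abs_mul, hε, one_mul]
        congr 1
        ring
      simp only [kernelMajorant, this]
    rw [h2] at h1
    have h3 : |(1 - χ r) * (1 - χ r') * (l * (l ^ (-s)) ^ 2)| ≤ l * (l ^ (-s)) ^ 2 := by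
      have h4 : 0 ≤ l * (l ^ (-s)) ^ 2 := by positivity
      have h5 := hχrange r
      have h6 := hχrange r'
      rw [abs_mul, abs_of_nonneg h4, abs_mul, abs_of_nonneg (by linarith [h5.2]),
        abs_of_nonneg (by linarith [h6.2])]
      refine mul_le_of_le_one_left h4 (mul_le_one₀ ?_ ?_ ?_) <;>
        linarith [h5.1, h5.2, h6.1, h6.2]
    calc _ ≤ l * (l ^ (-s)) ^ 2 * (C / √Y * kernelMajorant (l / Y * (r - r'))) := by gcongr
      _ = k (r - r') := by rw [hk]; ring
  have hkint : ∫ x, k x = l * (l ^ (-s)) ^ 2 * (C / √Y) * (Y / l * ∫ z, kernelMajorant z) := by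
    rw [hk, integral_const_mul, Measure.integral_comp_mul_left, smul_eq_mul, inv_div,
      abs_of_pos (by positivity)]
  calc ∫ r' in Set.Ioc 0 R, ‖∫ ρ in Set.Ioc l (l * 4), dyadicKernel a s χ t ε l r ρ *
        (starRingEnd ℂ) (dyadicKernel a s χ t ε l r' ρ)‖
      ≤ ∫ r' in Set.Ioc 0 R, k (r - r') := by
        refine integral_mono_of_nonneg (Filter.Eventually.of_forall fun _ => norm_nonneg _)
          (hki.comp_sub_left r).integrableOn ?_
        refine ae_restrict_of_ae ?_
        filter_upwards [Measure.ae_ne volume r] with r' hr'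
        exact hpt r' hr'
    _ ≤ ∫ r', k (r - r') :=
        setIntegral_le_integral (hki.comp_sub_left r)
          (Filter.Eventually.of_forall fun _ => hk0 _)
    _ = l * (l ^ (-s)) ^ 2 * (C / √Y) * (Y / l * ∫ z, kernelMajorant z) := by
        rw [integral_sub_left_eq_self, hkint]
    _ ≤ l * (l ^ (-s)) ^ 2 * (C / √Y) * (Y / l * N) := by
        gcongr
        rw [hN]
        linarith
    _ = C * √(2 / c) * N * l ^ (a / 2 - 2 * s) := by
        have e1 : √Y = √(2 / c) * l ^ (a / 2) := by
          rw [hY, Real.sqrt_mul (by positivity), Real.sqrt_eq_rpow (l ^ a), ← rpow_mul hl0.le]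
          congr 2
          ring
        have e2 : l ^ (a / 2 - 2 * s) = l ^ (a / 2) * (l ^ (-s)) ^ 2 := by
          rw [← rpow_natCast, ← rpow_mul hl0.le, ← rpow_add hl0]
          congr 1
          push_cast
          ring
        have e3 : Y / √Y = √Y := Real.div_sqrt
        calc l * (l ^ (-s)) ^ 2 * (C / √Y) * (Y / l * N)
            = (l ^ (-s)) ^ 2 * C * (Y / √Y) * N := by field_simp
          _ = _ := by rw [e3, e1, e2]; ring

lemma cutoff_mul_integral_eq_sum_dyadicKernel {a s : ℝ} {χ t : ℝ → ℝ} {ε : ℝ} (hs : 0 < s)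
    (hχm : Measurable χ) (hχ0 : ∀ x : ℝ, x ∉ Set.Ioo (-2 : ℝ) 2 → χ x = 0)
    (hχ1 : ∀ x ∈ Set.Icc (-1 : ℝ) 1, χ x = 1) (hχrange : ∀ x, χ x ∈ Set.Icc (0 : ℝ) 1)
    (ht : Measurable t) {f : ℝ → ℂ} (hf : Integrable f) {n : ℕ}
    (hfn : ∀ ρ : ℝ, 2 ^ n < ρ → f ρ = 0) (r : ℝ) :
    ((1 - χ r : ℝ) : ℂ) * ∫ ρ in Set.Ioi (0 : ℝ),
        Complex.exp (Complex.I * ((ε * r * ρ + t r * ρ ^ a : ℝ) : ℂ)) *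
          ((ρ ^ (-s) : ℝ) : ℂ) * ((1 - χ ρ : ℝ) : ℂ) * f ρ =
      ∑ j ∈ Finset.range n, ∫ ρ in Set.Ioc (2 ^ j : ℝ) (2 ^ j * 4),
        dyadicKernel a s χ t ε (2 ^ j) r ρ * f ρ := by
  have hloc : ∀ j : ℕ, ∫ ρ in Set.Ioc (2 ^ j : ℝ) (2 ^ j * 4),
      dyadicKernel a s χ t ε (2 ^ j) r ρ * f ρ =
        ∫ ρ in Set.Ioi (0 : ℝ), dyadicKernel a s χ t ε (2 ^ j) r ρ * f ρ := fun j => by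
    have hj : (0 : ℝ) < 2 ^ j := by positivity
    refine (setIntegral_eq_of_subset_of_forall_sdiff_eq_zero measurableSet_Ioi
      (fun x hx => hj.trans hx.1) fun ρ hρ => ?_).symm
    have hρ0 : 0 < ρ := hρ.1
    have hu : ρ / 2 ^ j ∉ Set.Ioo (1 : ℝ) 4 := fun h => hρ.2 ⟨(one_lt_div hj).1 h.1, by
      have := (div_lt_iff₀ hj).1 h.2
      linarith⟩
    rw [dyadicKernel, cutoff_sub_eq_zero_of_notMem hχ0 hχ1 (by positivity) hu]
    simp
  simp_rw [hloc]
  rw [← integral_finsetSum, ← integral_const_mul]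
  · refine setIntegral_congr_fun measurableSet_Ioi fun ρ hρ => ?_
    replace hρ : 0 < ρ := hρ
    simp only [dyadicKernel]
    rw [← Finset.sum_mul, ← Finset.mul_sum, ← Finset.mul_sum, ← Complex.ofReal_sum,
      ← Finset.mul_sum]
    have htel : ∑ j ∈ Finset.range n, (χ (ρ / 2 ^ j / 2) - χ (ρ / 2 ^ j)) =
        χ (ρ / 2 ^ n) - χ ρ := by
      have := Finset.sum_range_sub (fun j : ℕ => χ (ρ / 2 ^ j)) n
      simpa only [pow_succ, ← div_div, pow_zero, div_one] using this
    rw [htel]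
    rcases le_or_gt ρ (2 ^ n) with h | h
    · have h1 : ρ / 2 ^ n ≤ 1 := (div_le_one (by positivity)).2 h
      have h0 : 0 ≤ ρ / 2 ^ n := by positivity
      rw [hχ1 _ ⟨by linarith, h1⟩]
      push_cast
      ring
    · rw [hfn ρ h]
      simp
  · refine fun j _ => (hf.integrableOn (s := Set.Ioi 0)).bdd_mul (c := 1) ?_
      (Filter.Eventually.of_forall fun ρ =>
        norm_dyadicKernel_le_one hs (one_le_pow₀ one_le_two) hχ1 hχrange r ρ)
    exact ((measurable_dyadicKernel hχm ht).comp measurable_prodMk_left).aestronglyMeasurable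

lemma sum_range_sq_pow_le {p : ℝ} (hp : 0 < p) (hp1 : p < 1) (n : ℕ) :
    ∑ j ∈ Finset.range n, (p ^ 2) ^ j ≤ (1 - p ^ 2)⁻¹ := by
  have h : p ^ 2 < 1 := by nlinarith
  rw [← tsum_geometric_of_lt_one (by positivity) h]
  exact (summable_geometric_of_lt_one (by positivity) h).sum_le_tsum _ fun _ _ => by positivity

lemma norm_sum_sq_le_geometric {p : ℝ} (hp : 0 < p) (hp1 : p < 1) (n : ℕ) (H : ℕ → ℂ) :
    ‖∑ j ∈ Finset.range n, H j‖ ^ 2 ≤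
      (1 - p ^ 2)⁻¹ * ∑ j ∈ Finset.range n, ((p ^ 2) ^ j)⁻¹ * ‖H j‖ ^ 2 := by
  have h1 := sum_range_sq_pow_le hp hp1 n
  calc ‖∑ j ∈ Finset.range n, H j‖ ^ 2 ≤ (∑ j ∈ Finset.range n, p ^ j * (‖H j‖ / p ^ j)) ^ 2 := by
        gcongr
        refine (norm_sum_le _ _).trans (le_of_eq (Finset.sum_congr rfl fun j _ => ?_))
        field_simp
    _ ≤ (∑ j ∈ Finset.range n, (p ^ j) ^ 2) * ∑ j ∈ Finset.range n, (‖H j‖ / p ^ j) ^ 2 :=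
        Finset.sum_mul_sq_le_sq_mul_sq _ _ _
    _ = (∑ j ∈ Finset.range n, (p ^ 2) ^ j) *
        ∑ j ∈ Finset.range n, ((p ^ 2) ^ j)⁻¹ * ‖H j‖ ^ 2 := by
        congr 1
        · exact Finset.sum_congr rfl fun j _ => by rw [← pow_mul, ← pow_mul, mul_comm]
        · exact Finset.sum_congr rfl fun j _ => by
            rw [div_pow, ← pow_mul, ← pow_mul, mul_comm j 2, div_eq_inv_mul]
    _ ≤ _ := by gcongr

theorem stmt11 (a : ℝ) (ha : 0 < a) (ha1 : a ≠ 1) (s : ℝ) (hs : a / 4 < s)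
    (χ : ℝ → ℝ) (hχsm : ContDiff ℝ (⊤ : ℕ∞) χ) (hχcs : HasCompactSupport χ)
    (hχeven : ∀ x, χ (-x) = χ x)
    (hχ0 : ∀ x : ℝ, x ∉ Set.Ioo (-2 : ℝ) 2 → χ x = 0)
    (hχ1 : ∀ x ∈ Set.Icc (-1 : ℝ) 1, χ x = 1)
    (hχrange : ∀ x, χ x ∈ Set.Icc (0 : ℝ) 1) :
    ∃ C > 0, ∀ t : ℝ → ℝ, Measurable t → (∀ r, t r ∈ Set.Ioo (-1 : ℝ) 1) →
      ∀ ε : ℝ, (ε = 1 ∨ ε = -1) →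
      ∀ f : ℝ → ℂ, ContDiff ℝ (⊤ : ℕ∞) f → HasCompactSupport f → tsupport f ⊆ Set.Ioi 0 →
      (∫ r in Set.Ioi (0 : ℝ),
          ‖((1 - χ r : ℝ) : ℂ) *
            ∫ ρ in Set.Ioi (0 : ℝ),
              Complex.exp (Complex.I * ((ε * r * ρ + t r * ρ ^ a : ℝ) : ℂ)) *
                ((ρ ^ (-s) : ℝ) : ℂ) * ((1 - χ ρ : ℝ) : ℂ) * f ρ‖ ^ 2)
        ≤ C ^ 2 * ∫ ρ in Set.Ioi (0 : ℝ), ‖f ρ‖ ^ 2 := by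
  have hs0 : 0 < s := by linarith
  have hχm : Measurable χ := hχsm.continuous.measurable
  obtain ⟨M, hM, hdy⟩ := exists_integral_dyadicKernel_le ha ha1 hs0 hχsm hχ0 hχ1 hχrange
  set p : ℝ := 2 ^ ((a / 2 - 2 * s) / 4) with hp
  have hp0 : 0 < p := by positivity
  have hp1 : p < 1 := rpow_lt_one_of_one_lt_of_neg one_lt_two (by linarith)
  have hq0 : 0 < 1 - p ^ 2 := by nlinarith
  have hpj : ∀ j : ℕ, ((2 : ℝ) ^ j) ^ (a / 2 - 2 * s) = (p ^ 2) ^ j * (p ^ 2) ^ j := fun j => by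
    rw [← mul_pow, ← pow_add, hp, ← rpow_natCast, ← rpow_natCast, ← rpow_natCast,
      ← rpow_mul zero_le_two, ← rpow_mul zero_le_two, ← rpow_mul zero_le_two]
    congr 1
    push_cast
    ring
  refine ⟨√M * (1 - p ^ 2)⁻¹, by positivity, ?_⟩
  intro t ht htr ε hε f hf hfc _
  have hε1 : |ε| = 1 := by rcases hε with rfl | rfl <;> simp
  have hfcont : Continuous f := hf.continuous
  have hfi : Integrable f := hfcont.integrable_of_hasCompactSupport hfc
  have hf2i : Integrable (fun ρ => ‖f ρ‖ ^ 2) :=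
    (by fun_prop : Continuous fun ρ => ‖f ρ‖ ^ 2).integrable_of_hasCompactSupport
      (hfc.comp_left (g := fun z => ‖z‖ ^ 2) (by simp))
  obtain ⟨F, hF⟩ := hfcont.bounded_above_of_compact_support hfc
  obtain ⟨n, hn⟩ : ∃ n : ℕ, ∀ ρ : ℝ, 2 ^ n < ρ → f ρ = 0 := by
    obtain ⟨L, hL⟩ := hfc.isCompact.isBounded.bddAbove
    obtain ⟨n, hn⟩ := pow_unbounded_of_one_lt L one_lt_two
    exact ⟨n, fun ρ hρ => image_eq_zero_of_notMem_tsupport fun h =>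
      (hn.trans hρ).not_ge (hL h)⟩
  simp_rw [cutoff_mul_integral_eq_sum_dyadicKernel (a := a) (ε := ε) hs0 hχm hχ0 hχ1 hχrange ht
    hfi hn]
  set J : ℝ := ∫ ρ in Set.Ioi (0 : ℝ), ‖f ρ‖ ^ 2 with hJ
  have hJ0 : 0 ≤ J := integral_nonneg fun _ => by positivity
  set H : ℕ → ℝ → ℂ := fun j r => ∫ ρ in Set.Ioc (2 ^ j : ℝ) (2 ^ j * 4),
    dyadicKernel a s χ t ε (2 ^ j) r ρ * f ρ with hH
  have hHbound : ∀ j r, ‖H j r‖ ≤ ∫ ρ, ‖f ρ‖ := fun j r => by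
    refine (norm_integral_le_of_norm_le hfi.norm.integrableOn
      (Filter.Eventually.of_forall fun ρ => ?_)).trans (setIntegral_le_integral hfi.norm
        (Filter.Eventually.of_forall fun _ => norm_nonneg _))
    rw [norm_mul]
    exact mul_le_of_le_one_left (norm_nonneg _)
      (norm_dyadicKernel_le_one hs0 (one_le_pow₀ one_le_two) hχ1 hχrange r ρ)
  have hHm : ∀ j, Measurable (H j) := fun j =>
    (StronglyMeasurable.integral_prod_right
      (f := fun r ρ => dyadicKernel a s χ t ε (2 ^ j) r ρ * f ρ)
      ((measurable_dyadicKernel hχm ht).mul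
        (hfcont.measurable.comp measurable_snd)).stronglyMeasurable).measurable
  have hHsq : ∀ j R, ∫ r in Set.Ioc 0 R, ‖H j r‖ ^ 2 ≤ M * ((p ^ 2) ^ j * (p ^ 2) ^ j) * J :=
    fun j R => by
      have hj : (0 : ℝ) < 2 ^ j := by positivity
      refine (hdy t ht htr ε hε1 (2 ^ j) (one_le_pow₀ one_le_two) R f hfcont.measurable F
        hF).trans ?_
      rw [hpj]
      gcongr
      exact setIntegral_mono_set hf2i.integrableOn
        (Filter.Eventually.of_forall fun _ => by positivity)
        (Filter.Eventually.of_forall fun x hx => hj.trans hx.1)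
  have hHi : ∀ j R, IntegrableOn (fun r => ‖H j r‖ ^ 2) (Set.Ioc 0 R) := fun j R => by
    refine Integrable.of_bound ((hHm j).norm.pow_const 2).aestronglyMeasurable
      ((∫ ρ, ‖f ρ‖) ^ 2) (Filter.Eventually.of_forall fun r => ?_)
    rw [Real.norm_of_nonneg (by positivity)]
    gcongr
    exact hHbound j r
  have hgeo := sum_range_sq_pow_le hp0 hp1 n
  have hfin : ∀ R, ∫ r in Set.Ioc 0 R, ‖∑ j ∈ Finset.range n, H j r‖ ^ 2 ≤
      (√M * (1 - p ^ 2)⁻¹) ^ 2 * J := fun R => by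
    have hint : ∀ j ∈ Finset.range n,
        IntegrableOn (fun r => ((p ^ 2) ^ j)⁻¹ * ‖H j r‖ ^ 2) (Set.Ioc 0 R) := fun j _ =>
      (hHi j R).const_mul _
    calc ∫ r in Set.Ioc 0 R, ‖∑ j ∈ Finset.range n, H j r‖ ^ 2
        ≤ ∫ r in Set.Ioc 0 R,
          (1 - p ^ 2)⁻¹ * ∑ j ∈ Finset.range n, ((p ^ 2) ^ j)⁻¹ * ‖H j r‖ ^ 2 :=
          integral_mono_of_nonneg (Filter.Eventually.of_forall fun _ => by positivity)
            ((integrable_finsetSum _ hint).const_mul _) (Filter.Eventually.of_forall fun r =>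
              norm_sum_sq_le_geometric hp0 hp1 n fun j => H j r)
      _ = (1 - p ^ 2)⁻¹ *
          ∑ j ∈ Finset.range n, ((p ^ 2) ^ j)⁻¹ * ∫ r in Set.Ioc 0 R, ‖H j r‖ ^ 2 := by
          rw [integral_const_mul, integral_finsetSum _ hint]
          simp_rw [integral_const_mul]
      _ ≤ (1 - p ^ 2)⁻¹ * ∑ j ∈ Finset.range n,
          ((p ^ 2) ^ j)⁻¹ * (M * ((p ^ 2) ^ j * (p ^ 2) ^ j) * J) := by
          gcongr with j
          exact hHsq j R
      _ = (1 - p ^ 2)⁻¹ * (M * J * ∑ j ∈ Finset.range n, (p ^ 2) ^ j) := by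
          congr 1
          rw [Finset.mul_sum]
          refine Finset.sum_congr rfl fun j _ => ?_
          field_simp
      _ ≤ (1 - p ^ 2)⁻¹ * (M * J * (1 - p ^ 2)⁻¹) := by gcongr
      _ = (√M * (1 - p ^ 2)⁻¹) ^ 2 * J := by
          rw [mul_pow, Real.sq_sqrt hM.le]
          ring
  by_cases hI : IntegrableOn (fun r => ‖∑ j ∈ Finset.range n, H j r‖ ^ 2) (Set.Ioi 0)
  · refine le_of_tendsto' (intervalIntegral_tendsto_integral_Ioi 0 hI
      tendsto_natCast_atTop_atTop) fun k => ?_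
    rw [intervalIntegral.integral_of_le k.cast_nonneg]
    exact hfin k
  · rw [integral_undef hI]
    positivity
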